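/- Let S1, S2, V, X0, X1, X2 be finitely-valued random variables such that X0, X1, X2 are mutually independent and (X0,X1,X2) is independent of (S1,S2,V), i.e., the joint pmf factors as p(s1,s2)p(v|s1,s2)p(x0)p(x1)p(x2). Set R0 = H(X0), R1 = H(X1), R2 = H(X2), Y1 = (X0,X1), Y2 = (X0,X2), U0 = (X0,V), U1 = X1, U2 = X2. Then the five Theorem-2 inequalities, namely H(S1) < I(U0,U1,S1;Y1) − I(U0,U1;S2|S1); H(S2) < I(U0,U2,S2;Y2) − I(U0,U2;S1|S2); H(S1,S2) < I(U0,U1,S1;Y1) + I(U2,S2;Y2|U0) − I(U1,S1;U2,S2|U0); H(S1,S2) < I(U1,S1;Y1|U0) + I(U0,U2,S2;Y2) − I(U1,S1;U2,S2|U0); H(S1,S2) < I(U0,U1,S1;Y1) + I(U0,U2,S2;Y2) − I(U1,S1;U2,S2|U0) − I(S1,S2;U0), hold if and only if the following four inequalities hold: R0 + R1 > I(S1,S2;V) + H(S1|V); R0 + R2 > I(S1,S2;V) + H(S2|V); R0 + R1 + R2 > I(S1,S2;V) + H(S1|V) + H(S2|V); 2R0 + R1 + R2 > 2·I(S1,S2;V)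 + H(S1|V) + H(S2|V). -/

import Mathlib

/-!
Every entropy occurring in the five inequalities is the entropy of a tuple made of some of
`X0, X1, X2` (possibly repeated) and some of `S1, S2, V`. Entropy depends only on the level sets
of a variable (`H_relabel`), so repetitions and the order of the components are irrelevant, and by
independence (`Indep.H_of_iff`) it splits as the sum of the `R i` of the channel inputs that occur
plus the entropy of the source part. After this substitution each of the five inequalities is, by
linear arithmetic, one of the four target ones; the third and the fourth both become the
inequality for `R0 + R1 + R2`.
-/

open Real Filter

attribute [local instance] Classical.propDecidable

noncomputable section

namespace CSBC

/-- A probability mass function on a finite type. -/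
def IsPMF {Ω : Type*} [Fintype Ω] (p : Ω → ℝ) : Prop :=
  (∀ ω, 0 ≤ p ω) ∧ ∑ ω, p ω = 1

/-- Distribution (pushforward pmf) of a random variable `X` under pmf `p`. -/
def dist {Ω A : Type*} [Fintype Ω] [Fintype A] (p : Ω → ℝ) (X : Ω → A) : A → ℝ :=
  fun a => ∑ ω, if X ω = a then p ω else 0

/-- Shannon entropy of the random variable `X` under the pmf `p`. -/
def H {Ω A : Type*} [Fintype Ω] [Fintype A] (p : Ω → ℝ) (X : Ω → A) : ℝ :=
  -∑ a, dist p X a * Real.log (dist p X a)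

/-- Mutual information `I(X;Y)` under the pmf `p`. -/
def I2 {Ω A B : Type*} [Fintype Ω] [Fintype A] [Fintype B]
    (p : Ω → ℝ) (X : Ω → A) (Y : Ω → B) : ℝ :=
  H p X + H p Y - H p (fun ω => (X ω, Y ω))

/-- Conditional mutual information `I(X;Y|Z)` under the pmf `p`. -/
def CI {Ω A B C : Type*} [Fintype Ω] [Fintype A] [Fintype B] [Fintype C]
    (p : Ω → ℝ) (X : Ω → A) (Y : Ω → B) (Z : Ω → C) : ℝ :=
  H p (fun ω => (X ω, Z ω)) + H p (fun ω => (Y ω, Z ω))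
    - H p (fun ω => (X ω, Y ω, Z ω)) - H p Z

end CSBC

open CSBC
namespace CSBC

/-- The five inequalities of Theorem 2 (Minero–Kim form) for sources `S1, S2`,
auxiliary triple `V0, V1, V2` and channel outputs `Y1, Y2`. -/
def MKfive {Ω A1 A2 B0 B1 B2 C1 C2 : Type*} [Fintype Ω] [Fintype A1] [Fintype A2]
    [Fintype B0] [Fintype B1] [Fintype B2] [Fintype C1] [Fintype C2]
    (p : Ω → ℝ) (S1 : Ω → A1) (S2 : Ω → A2) (V0 : Ω → B0) (V1 : Ω → B1) (V2 : Ω → B2)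
    (Y1 : Ω → C1) (Y2 : Ω → C2) : Prop :=
  H p S1 < I2 p (fun ω => (V0 ω, V1 ω, S1 ω)) Y1
      - CI p (fun ω => (V0 ω, V1 ω)) S2 S1 ∧
  H p S2 < I2 p (fun ω => (V0 ω, V2 ω, S2 ω)) Y2
      - CI p (fun ω => (V0 ω, V2 ω)) S1 S2 ∧
  H p (fun ω => (S1 ω, S2 ω)) < I2 p (fun ω => (V0 ω, V1 ω, S1 ω)) Y1
      + CI p (fun ω => (V2 ω, S2 ω)) Y2 V0
      - CI p (fun ω => (V1 ω, S1 ω)) (fun ω => (V2 ω, S2 ω)) V0 ∧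
  H p (fun ω => (S1 ω, S2 ω)) < CI p (fun ω => (V1 ω, S1 ω)) Y1 V0
      + I2 p (fun ω => (V0 ω, V2 ω, S2 ω)) Y2
      - CI p (fun ω => (V1 ω, S1 ω)) (fun ω => (V2 ω, S2 ω)) V0 ∧
  H p (fun ω => (S1 ω, S2 ω)) < I2 p (fun ω => (V0 ω, V1 ω, S1 ω)) Y1
      + I2 p (fun ω => (V0 ω, V2 ω, S2 ω)) Y2
      - CI p (fun ω => (V1 ω, S1 ω)) (fun ω => (V2 ω, S2 ω)) V0
      - I2 p (fun ω => (S1 ω, S2 ω)) V0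

end CSBC
namespace CSBC

/-- Independence of two random variables: the joint pmf is the product of the marginals. -/
def Indep {Ω A B : Type*} [Fintype Ω] [Fintype A] [Fintype B]
    (p : Ω → ℝ) (X : Ω → A) (Y : Ω → B) : Prop :=
  ∀ a b, dist p (fun ω => (X ω, Y ω)) (a, b) = dist p X a * dist p Y b

lemma sum_dist_mul {Ω A : Type*} [Fintype Ω] [Fintype A] (p : Ω → ℝ) (X : Ω → A)
    (f : A → ℝ) : ∑ a, dist p X a * f a = ∑ ω, p ω * f (X ω) := by
  simp only [dist, Finset.sum_mul]
  rw [Finset.sum_comm]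
  refine Finset.sum_congr rfl fun ω _ => ?_
  simp [ite_mul]

/-- Entropy is the expectation of `-log` of the probability of the observed value; this form
sees `X` only through its level sets in `Ω`. -/
lemma H_eq_expectation {Ω A : Type*} [Fintype Ω] [Fintype A] (p : Ω → ℝ) (X : Ω → A) :
    H p X = -∑ ω, p ω * Real.log (dist p X (X ω)) := by
  unfold H
  rw [sum_dist_mul p X fun a => Real.log (dist p X a)]

/-- Two random variables that determine each other have the same entropy. -/
lemma H_relabel {Ω A B : Type*} [Fintype Ω] [Fintype A] [Fintype B] (p : Ω → ℝ)
    (X : Ω → A) (Y : Ω → B) (h : ∀ ω ω', X ω = X ω' ↔ Y ω = Y ω') : H p X = H p Y := by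
  simp only [H_eq_expectation, dist, h]

lemma dist_pos {Ω A : Type*} [Fintype Ω] [Fintype A] {p : Ω → ℝ} (hp : IsPMF p)
    (X : Ω → A) {ω : Ω} (hω : p ω ≠ 0) : 0 < dist p X (X ω) := by
  unfold dist
  refine Finset.sum_pos' (fun i _ => ?_) ⟨ω, Finset.mem_univ _, ?_⟩
  · split_ifs
    exacts [hp.1 i, le_rfl]
  · simpa using lt_of_le_of_ne (hp.1 ω) (Ne.symm hω)

lemma Indep.H_pair {Ω A B : Type*} [Fintype Ω] [Fintype A] [Fintype B] {p : Ω → ℝ}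
    (hp : IsPMF p) {X : Ω → A} {Y : Ω → B} (h : Indep p X Y) :
    H p (fun ω => (X ω, Y ω)) = H p X + H p Y := by
  simp only [H_eq_expectation, h _ _]
  rw [← neg_add, ← Finset.sum_add_distrib]
  congr 1
  refine Finset.sum_congr rfl fun ω _ => ?_
  by_cases hω : p ω = 0
  · simp [hω]
  · rw [Real.log_mul (dist_pos hp X hω).ne' (dist_pos hp Y hω).ne', mul_add]

lemma dist_comp {Ω A B : Type*} [Fintype Ω] [Fintype A] [Fintype B] (p : Ω → ℝ)
    (X : Ω → A) (f : A → B) (b : B) :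
    dist p (fun ω => f (X ω)) b = ∑ a, dist p X a * if f a = b then 1 else 0 := by
  rw [sum_dist_mul]
  simp [dist]

lemma Indep.comp {Ω A B C D : Type*} [Fintype Ω] [Fintype A] [Fintype B] [Fintype C]
    [Fintype D] {p : Ω → ℝ} {X : Ω → A} {Y : Ω → B} (h : Indep p X Y)
    (f : A → C) (g : B → D) : Indep p (fun ω => f (X ω)) (fun ω => g (Y ω)) := by
  intro c d
  rw [dist_comp p X f, dist_comp p Y g,
    dist_comp p (fun ω => (X ω, Y ω)) (fun z => (f z.1, g z.2)) (c, d),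
    Fintype.sum_prod_type, Finset.sum_mul_sum]
  refine Finset.sum_congr rfl fun a _ => Finset.sum_congr rfl fun b _ => ?_
  rw [h a b]
  by_cases h1 : f a = c <;> by_cases h2 : g b = d <;> simp [h1, h2]

lemma sum_dist {Ω A : Type*} [Fintype Ω] [Fintype A] {p : Ω → ℝ} (hp : IsPMF p)
    (X : Ω → A) : ∑ a, dist p X a = 1 := by
  simpa [hp.2] using sum_dist_mul p X fun _ => 1

/-- The product form of the joint pmf of three variables makes the first independent of the
other two, and the other two independent of each other. -/
lemma indep_of_triple {Ω A B C : Type*} [Fintype Ω] [Fintype A] [Fintype B] [Fintype C]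
    {p : Ω → ℝ} (hp : IsPMF p) {X : Ω → A} {Y : Ω → B} {Z : Ω → C}
    (h : ∀ a b c, dist p (fun ω => (X ω, Y ω, Z ω)) (a, b, c)
      = dist p X a * dist p Y b * dist p Z c) :
    Indep p X (fun ω => (Y ω, Z ω)) ∧ Indep p Y Z := by
  have hYZ : Indep p Y Z := by
    intro b c
    rw [dist_comp p (fun ω => (X ω, Y ω, Z ω)) (fun t => t.2) (b, c), Fintype.sum_prod_type]
    calc _ = ∑ a, dist p X a * (dist p Y b * dist p Z c) := by
            refine Finset.sum_congr rfl fun a _ => ?_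
            simp [h, mul_assoc]
      _ = _ := by rw [← Finset.sum_mul, sum_dist hp, one_mul]
  refine ⟨fun a bc => ?_, hYZ⟩
  obtain ⟨b, c⟩ := bc
  rw [h, hYZ b c, mul_assoc]

/-- If `Z` carries the same information as the pair of independent variables `X`, `Y`, then
`H(Z) = H(X) + H(Y)`. -/
lemma Indep.H_of_iff {Ω A B C : Type*} [Fintype Ω] [Fintype A] [Fintype B] [Fintype C]
    {p : Ω → ℝ} (hp : IsPMF p) {X : Ω → A} {Y : Ω → B} (h : Indep p X Y) (Z : Ω → C)
    (hZ : ∀ ω ω', Z ω = Z ω' ↔ X ω = X ω' ∧ Y ω = Y ω') : H p Z = H p X + H p Y := by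
  rw [← h.H_pair hp]
  exact H_relabel p _ _ fun ω ω' => by rw [hZ, Prod.mk.injEq]

end CSBC

/-- specialization to the Gray–Wyner network.  With
`Y1 = (X0,X1)`, `Y2 = (X0,X2)`, `U0 = (X0,V)`, `U1 = X1`, `U2 = X2`, where
`X0, X1, X2` are mutually independent and independent of `(S1,S2,V)`, and
`R0 = H(X0)`, `R1 = H(X1)`, `R2 = H(X2)`, the five Theorem-2 inequalities hold
iff the four Gray–Wyner-type inequalities hold. -/
theorem gray_wyner_specialization
    {Ω A1 A2 AV E0 E1 E2 : Type*}
    [Fintype Ω] [Fintype A1] [Fintype A2] [Fintype AV] [Fintype E0] [Fintype E1]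
    [Fintype E2]
    (p : Ω → ℝ) (hp : IsPMF p)
    (S1 : Ω → A1) (S2 : Ω → A2) (V : Ω → AV)
    (X0 : Ω → E0) (X1 : Ω → E1) (X2 : Ω → E2)
    (hXindep : ∀ (a : E0) (b : E1) (c : E2),
      dist p (fun ω => (X0 ω, X1 ω, X2 ω)) (a, b, c)
        = dist p X0 a * dist p X1 b * dist p X2 c)
    (hindep : ∀ (x : E0 × E1 × E2) (s : A1 × A2 × AV),
      dist p (fun ω => ((X0 ω, X1 ω, X2 ω), S1 ω, S2 ω, V ω)) (x, s)
        = dist p (fun ω => (X0 ω, X1 ω, X2 ω)) x *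
          dist p (fun ω => (S1 ω, S2 ω, V ω)) s)
    (R0 R1 R2 : ℝ) (hR0 : R0 = H p X0) (hR1 : R1 = H p X1) (hR2 : R2 = H p X2) :
    MKfive p S1 S2 (fun ω => (X0 ω, V ω)) X1 X2
        (fun ω => (X0 ω, X1 ω)) (fun ω => (X0 ω, X2 ω)) ↔
      (R0 + R1 > I2 p (fun ω => (S1 ω, S2 ω)) V + (H p (fun ω => (S1 ω, V ω)) - H p V) ∧
       R0 + R2 > I2 p (fun ω => (S1 ω, S2 ω)) V + (H p (fun ω => (S2 ω, V ω)) - H p V) ∧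
       R0 + R1 + R2 > I2 p (fun ω => (S1 ω, S2 ω)) V
          + (H p (fun ω => (S1 ω, V ω)) - H p V) + (H p (fun ω => (S2 ω, V ω)) - H p V) ∧
       2 * R0 + R1 + R2 > 2 * I2 p (fun ω => (S1 ω, S2 ω)) V
          + (H p (fun ω => (S1 ω, V ω)) - H p V) + (H p (fun ω => (S2 ω, V ω)) - H p V)) := by
  have hI : Indep p (fun ω => (X0 ω, X1 ω, X2 ω)) (fun ω => (S1 ω, S2 ω, V ω)) := hindep
  obtain ⟨h0, h12⟩ := indep_of_triple hp hXindep
  -- Entropies of the channel inputs.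
  have e01 := (h0.comp id Prod.fst).H_pair hp
  have e02 := (h0.comp id Prod.snd).H_pair hp
  have e012 := h0.H_pair hp
  have e12 := h12.H_pair hp
  simp only [id] at e01 e02
  -- Independence of the groups of channel inputs from the groups of source variables.
  have i0V := hI.comp (fun x => x.1) (fun s => s.2.2)
  have i0T := hI.comp (fun x => x.1) (fun s => ((s.1, s.2.1), s.2.2))
  have i1V := hI.comp (fun x => (x.1, x.2.1)) (fun s => s.2.2)
  have i1S := hI.comp (fun x => (x.1, x.2.1)) (fun s => (s.1, s.2.2))
  have i1T := hI.comp (fun x => (x.1, x.2.1)) (fun s => ((s.1, s.2.1), s.2.2))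
  have i2V := hI.comp (fun x => (x.1, x.2.2)) (fun s => s.2.2)
  have i2S := hI.comp (fun x => (x.1, x.2.2)) (fun s => (s.2.1, s.2.2))
  have i2T := hI.comp (fun x => (x.1, x.2.2)) (fun s => ((s.1, s.2.1), s.2.2))
  have i3T := hI.comp (fun x => x) (fun s => ((s.1, s.2.1), s.2.2))
  dsimp only at i0V i0T i1V i1S i1T i2V i2S i2T i3T
  -- The source pair in the other order.
  have s21 : H p (fun ω => (S2 ω, S1 ω)) = H p (fun ω => (S1 ω, S2 ω)) :=
    H_relabel p _ _ fun ω ω' => by simp only [Prod.mk.injEq]; tauto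
  -- Mixed tuples, in the order in which they occur in the five inequalities.
  have m1 := i1S.H_of_iff hp (fun ω => ((X0 ω, V ω), X1 ω, S1 ω))
    fun ω ω' => by simp only [Prod.mk.injEq]; tauto
  have m2 := i1S.H_of_iff hp (fun ω => (((X0 ω, V ω), X1 ω, S1 ω), X0 ω, X1 ω))
    fun ω ω' => by simp only [Prod.mk.injEq]; tauto
  have m3 := i1S.H_of_iff hp (fun ω => (((X0 ω, V ω), X1 ω), S1 ω))
    fun ω ω' => by simp only [Prod.mk.injEq]; tauto
  have m4 := i1T.H_of_iff hp (fun ω => (((X0 ω, V ω), X1 ω), S2 ω, S1 ω))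
    fun ω ω' => by simp only [Prod.mk.injEq]; tauto
  have m5 := i2S.H_of_iff hp (fun ω => ((X0 ω, V ω), X2 ω, S2 ω))
    fun ω ω' => by simp only [Prod.mk.injEq]; tauto
  have m6 := i2S.H_of_iff hp (fun ω => (((X0 ω, V ω), X2 ω, S2 ω), X0 ω, X2 ω))
    fun ω ω' => by simp only [Prod.mk.injEq]; tauto
  have m7 := i2S.H_of_iff hp (fun ω => (((X0 ω, V ω), X2 ω), S2 ω))
    fun ω ω' => by simp only [Prod.mk.injEq]; tauto
  have m8 := i2T.H_of_iff hp (fun ω => (((X0 ω, V ω), X2 ω), S1 ω, S2 ω))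
    fun ω ω' => by simp only [Prod.mk.injEq]; tauto
  have m9 := i2S.H_of_iff hp (fun ω => ((X2 ω, S2 ω), X0 ω, V ω))
    fun ω ω' => by simp only [Prod.mk.injEq]; tauto
  have m10 := i2V.H_of_iff hp (fun ω => ((X0 ω, X2 ω), X0 ω, V ω))
    fun ω ω' => by simp only [Prod.mk.injEq]; tauto
  have m11 := i2S.H_of_iff hp (fun ω => ((X2 ω, S2 ω), (X0 ω, X2 ω), X0 ω, V ω))
    fun ω ω' => by simp only [Prod.mk.injEq]; tauto
  have m12 := i0V.H_pair hp
  have m13 := i1S.H_of_iff hp (fun ω => ((X1 ω, S1 ω), X0 ω, V ω))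
    fun ω ω' => by simp only [Prod.mk.injEq]; tauto
  have m14 := i3T.H_of_iff hp (fun ω => ((X1 ω, S1 ω), (X2 ω, S2 ω), X0 ω, V ω))
    fun ω ω' => by simp only [Prod.mk.injEq]; tauto
  have m15 := i1V.H_of_iff hp (fun ω => ((X0 ω, X1 ω), X0 ω, V ω))
    fun ω ω' => by simp only [Prod.mk.injEq]; tauto
  have m16 := i1S.H_of_iff hp (fun ω => ((X1 ω, S1 ω), (X0 ω, X1 ω), X0 ω, V ω))
    fun ω ω' => by simp only [Prod.mk.injEq]; tauto
  have m17 := i0T.H_of_iff hp (fun ω => ((S1 ω, S2 ω), X0 ω, V ω))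
    fun ω ω' => by simp only [Prod.mk.injEq]; tauto
  subst hR0 hR1 hR2
  simp only [MKfive, I2, CI]
  rw [s21, m1, m2, m3, m4, m5, m6, m7, m8, m9, m10, m11, m12, m13, m14, m15, m16, m17, e012, e01, e02, e12]
  constructor
  · rintro ⟨h1, h2, h3, -, h5⟩
    exact ⟨by linarith, by linarith, by linarith, by linarith⟩
  · rintro ⟨h1, h2, h3, h4⟩
    exact ⟨by linarith, by linarith, by linarith, by linarith, by linarith⟩
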